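/- arXiv:math/0310044 — 7 statements merged into one kernel-verified Lean document; each statement's English description precedes it below -/
import Mathlib

section
/- Let 0 < s ≤ t. Then ∫_{-∞}^{∞} P(B_s > z) · P(B_t ≤ z) dz = √(s+t)/√(2π), i.e. ∫_{-∞}^{∞} (1 − Φ_s(z)) · Φ_t(z) dz = √(s+t)/√(2π), where Φ_v(z) denotes the cumulative distribution function of the centered Gaussian measure on ℝ with variance v. -/
open MeasureTheory ProbabilityTheory Real Set

/-- The cumulative distribution function `Φ_v(z)` of the centered Gaussian
measure on `ℝ` with variance `v`. -/
noncomputable def gaussianCdf (v : ℝ) (z : ℝ) : ℝ :=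
  (ProbabilityTheory.gaussianReal 0 v.toNNReal (Set.Iic z)).toReal

lemma aux_lint (μ ν : Measure ℝ) [IsProbabilityMeasure μ] [IsProbabilityMeasure ν] :
    ∫⁻ z : ℝ, μ (Ioi z) * ν (Iic z) = ∫⁻ x, ∫⁻ y, ENNReal.ofReal (x - y) ∂ν ∂μ := by
  let S : Set (ℝ × (ℝ × ℝ)) := {q | q.1 < q.2.1 ∧ q.2.2 ≤ q.1}
  have hS : MeasurableSet S := by
    apply MeasurableSet.inter
    · exact measurableSet_lt measurable_fst (measurable_fst.comp measurable_snd)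
    · exact measurableSet_le (measurable_snd.comp measurable_snd) measurable_fst
  have h1 := Measure.prod_apply (μ := (volume : Measure ℝ)) (ν := μ.prod ν) hS
  have h2 := Measure.prod_apply_symm (μ := (volume : Measure ℝ)) (ν := μ.prod ν) hS
  have e1 : ∀ z : ℝ, (μ.prod ν) (Prod.mk z ⁻¹' S) = μ (Ioi z) * ν (Iic z) := by
    intro z
    rw [← Measure.prod_prod]
    rfl
  have e2 : ∀ p : ℝ × ℝ, (volume : Measure ℝ) ((fun x => (x, p)) ⁻¹' S)
      = ENNReal.ofReal (p.1 - p.2) := by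
    intro p
    rw [← Real.volume_Ico]
    congr 1
    ext z
    simp [S, and_comm]
  simp only [e1] at h1
  simp only [e2] at h2
  rw [← h1, h2, lintegral_prod _ (by fun_prop)]

lemma aux_tail (v : NNReal) (hv : v ≠ 0) :
    ∫⁻ w, ENNReal.ofReal w ∂(gaussianReal 0 v)
      = ENNReal.ofReal (Real.sqrt v / Real.sqrt (2 * Real.pi)) := by
  have hv' : (0:ℝ) < v := by positivity
  have hint : Integrable (fun x : ℝ => max x 0) (gaussianReal 0 v) := by
    have : Integrable (fun x : ℝ => x) (gaussianReal 0 v) :=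
      (memLp_id_gaussianReal (μ := 0) (v := v) 1).integrable (by norm_num)
    exact this.pos_part
  have h0 : ∀ w : ℝ, ENNReal.ofReal w = ENNReal.ofReal (max w 0) := by
    intro w; simp
  rw [lintegral_congr h0]
  rw [← ofReal_integral_eq_lintegral_ofReal hint (ae_of_all _ fun x => le_max_right _ _)]
  congr 1
  rw [integral_gaussianReal_eq_integral_smul hv]
  have h3 : (fun x : ℝ => gaussianPDFReal 0 v x • max x 0)
      = (Ioi (0:ℝ)).indicator
        (fun x => (√(2 * π * v))⁻¹ * (x * rexp (-(2 * (v:ℝ))⁻¹ * x ^ 2))) := by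
    ext x
    by_cases hx : 0 < x
    · rw [indicator_of_mem (by exact hx), max_eq_left hx.le, gaussianPDFReal]
      simp only [smul_eq_mul, sub_zero]
      rw [show -x ^ 2 / (2 * (v:ℝ)) = -(2 * (v:ℝ))⁻¹ * x ^ 2 by field_simp]
      ring
    · rw [indicator_of_notMem (by exact hx), max_eq_right (not_lt.mp hx)]
      simp
  rw [h3, integral_indicator measurableSet_Ioi, integral_const_mul]
  have h4 : ∫ x in Ioi (0:ℝ), x * rexp (-(2 * (v:ℝ))⁻¹ * x ^ 2) = v := by
    have := integral_mul_cexp_neg_mul_sq (b := (((2 * (v:ℝ))⁻¹ : ℝ) : ℂ))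
      (by rw [Complex.ofReal_re]; positivity)
    have h5 : ∀ x : ℝ, (x : ℂ) * Complex.exp (-(((2 * (v:ℝ))⁻¹ : ℝ) : ℂ) * (x:ℂ) ^ 2)
      = ((x * rexp (-(2 * (v:ℝ))⁻¹ * x ^ 2) : ℝ) : ℂ) := by
      intro x; push_cast; rfl
    simp_rw [h5] at this
    rw [integral_complex_ofReal] at this
    have h6 : ((2 : ℂ) * (((2 * (v:ℝ))⁻¹ : ℝ) : ℂ))⁻¹ = ((v:ℝ) : ℂ) := by
      rw [← Complex.ofReal_ofNat, ← Complex.ofReal_mul, ← Complex.ofReal_inv]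
      congr 1
      field_simp
    rw [h6] at this
    exact_mod_cast this
  rw [h4, Real.sqrt_mul (by positivity)]
  have h7 := Real.mul_self_sqrt hv'.le
  have h8 : 0 < √(v:ℝ) := Real.sqrt_pos.mpr hv'
  have h9 : 0 < √(2 * π) := by positivity
  field_simp
  nlinarith

/-- Formula (4.7): for `0 < s ≤ t`,
`∫_{-∞}^{∞} P(B_s > z) P(B_t ≤ z) dz = √(s+t)/√(2π)`. -/
theorem integral_gaussian_tail_mul_cdf (s t : ℝ) (hs : 0 < s) (hst : s ≤ t) :
    ∫ z : ℝ, (1 - gaussianCdf s z) * gaussianCdf t z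
      = Real.sqrt (s + t) / Real.sqrt (2 * Real.pi) := by
  have ht : 0 < t := hs.trans_le hst
  have e : ∀ z, (1 - gaussianCdf s z) * gaussianCdf t z
      = (gaussianReal 0 s.toNNReal (Ioi z) * gaussianReal 0 t.toNNReal (Iic z)).toReal := by
    intro z
    rw [ENNReal.toReal_mul, ← compl_Iic]
    have := probReal_compl_eq_one_sub (μ := gaussianReal 0 s.toNNReal) (measurableSet_Iic (a := z))
    simp only [Measure.real] at this
    rw [this]
    rfl
  simp_rw [e]
  have m1 : Measurable fun z : ℝ => gaussianReal 0 s.toNNReal (Ioi z) :=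
    Antitone.measurable fun a b h => measure_mono (Ioi_subset_Ioi h)
  have m2 : Measurable fun z : ℝ => gaussianReal 0 t.toNNReal (Iic z) :=
    Monotone.measurable fun a b h => measure_mono (Iic_subset_Iic.mpr h)
  have m3 : Measurable fun z : ℝ =>
      gaussianReal 0 s.toNNReal (Ioi z) * gaussianReal 0 t.toNNReal (Iic z) := m1.mul m2
  rw [integral_toReal m3.aemeasurable
    (ae_of_all _ fun z => ENNReal.mul_lt_top (measure_lt_top _ _) (measure_lt_top _ _)), aux_lint]
  have h1 : ∀ x : ℝ, ∫⁻ y, ENNReal.ofReal (x - y) ∂(gaussianReal 0 t.toNNReal)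
      = ∫⁻ y, ENNReal.ofReal (x + y) ∂(gaussianReal 0 t.toNNReal) := by
    intro x
    have hn := gaussianReal_map_neg (μ := 0) (v := t.toNNReal)
    rw [neg_zero] at hn
    conv_rhs => rw [← hn]
    rw [lintegral_map (by fun_prop) (by fun_prop)]
    simp only [sub_eq_add_neg]
  simp_rw [h1]
  rw [← Measure.lintegral_conv (f := fun w => ENNReal.ofReal w) (by fun_prop),
    gaussianReal_conv_gaussianReal, add_zero, ← Real.toNNReal_add hs.le ht.le,
    aux_tail _ (by simpa using add_pos hs ht), ENNReal.toReal_ofReal (by positivity),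
    Real.coe_toNNReal _ (by positivity)]
end

section
/- Let 0 < s ≤ t. Then ∫_{0}^{∞} P(B_s > z) · P(B_t > z) dz = (√s + √t − √(s+t))/(2√(2π)), i.e. ∫_{0}^{∞} (1 − Φ_s(z)) · (1 − Φ_t(z)) dz = (√s + √t − √(s+t))/(2√(2π)), where Φ_v(z) denotes the cumulative distribution function of the centered Gaussian measure on ℝ with variance v. -/
open MeasureTheory ProbabilityTheory Real Set

noncomputable def gphi (v x : ℝ) : ℝ := gaussianPDFReal 0 v.toNNReal x

lemma gphi_eq {v : ℝ} (hv : 0 < v) (x : ℝ) :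
    gphi v x = (√(2 * π * v))⁻¹ * rexp (-x ^ 2 / (2 * v)) := by
  simp [gphi, gaussianPDFReal, Real.coe_toNNReal v hv.le]

lemma gphi_deriv {v : ℝ} (hv : 0 < v) (x : ℝ) :
    HasDerivAt (gphi v) (-(x / v) * gphi v x) x := by
  have h1 : HasDerivAt (fun x : ℝ => -x ^ 2 / (2 * v)) (-(x / v)) x := by
    have := ((hasDerivAt_pow 2 x).neg).div_const (2 * v)
    refine this.congr_deriv ?_
    simp
    field_simp
  have h2 := (h1.exp).const_mul ((√(2 * π * v))⁻¹)
  have h3 : gphi v = fun x => (√(2 * π * v))⁻¹ * rexp (-x ^ 2 / (2 * v)) := by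
    ext y; exact gphi_eq hv y
  rw [h3]
  refine h2.congr_deriv ?_
  ring

lemma toNN_ne {v : ℝ} (hv : 0 < v) : v.toNNReal ≠ 0 := by simpa using hv

lemma cdf_eq {v : ℝ} (hv : 0 < v) (z : ℝ) :
    gaussianCdf v z = ∫ x in Iic z, gphi v x := by
  rw [gaussianCdf, gaussianReal_apply_eq_integral 0 (toNN_ne hv), ENNReal.toReal_ofReal]
  · rfl
  · exact integral_nonneg fun x => gaussianPDFReal_nonneg _ _ _

lemma gphi_integrable (v : ℝ) : Integrable (gphi v) := integrable_gaussianPDFReal _ _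

lemma gphi_cont {v : ℝ} (hv : 0 < v) : Continuous (gphi v) :=
  continuous_iff_continuousAt.2 fun x => (gphi_deriv hv x).continuousAt

lemma cdf_deriv {v : ℝ} (hv : 0 < v) (z : ℝ) :
    HasDerivAt (gaussianCdf v) (gphi v z) z := by
  have h : gaussianCdf v = fun z => (∫ x in Iic 0, gphi v x) + ∫ x in (0:ℝ)..z, gphi v x := by
    ext z
    rw [cdf_eq hv, ← intervalIntegral.integral_Iic_sub_Iic (gphi_integrable v).integrableOn
      (gphi_integrable v).integrableOn]
    ring
  rw [h]
  exact ((gphi_cont hv).integral_hasStrictDerivAt 0 z).hasDerivAt.const_add _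

noncomputable def gQ (v z : ℝ) : ℝ := 1 - gaussianCdf v z

lemma gQ_deriv {v : ℝ} (hv : 0 < v) (z : ℝ) : HasDerivAt (gQ v) (-gphi v z) z :=
  (cdf_deriv hv z).const_sub 1

lemma gQ_eq (v z : ℝ) : gQ v z = (gaussianReal 0 v.toNNReal).real (Ioi z) := by
  rw [gQ, ← compl_Iic, probReal_compl_eq_one_sub measurableSet_Iic]
  rfl

lemma gQ_nonneg (v z : ℝ) : 0 ≤ gQ v z := by rw [gQ_eq]; exact measureReal_nonneg

lemma gQ_le_one (v z : ℝ) : gQ v z ≤ 1 := by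
  rw [gQ_eq]; exact measureReal_le_one

lemma zgQ_tendsto (v : ℝ) : Filter.Tendsto (fun z => z * gQ v z) Filter.atTop (nhds 0) := by
  have hi : Integrable (fun x : ℝ => x) (gaussianReal 0 v.toNNReal) :=
    (memLp_id_gaussianReal 1).integrable (by simp)
  have h := tendsto_integral_Ioi_zero (μ := gaussianReal 0 v.toNNReal) (f := fun x : ℝ => x)
    (b := id) (l := Filter.atTop) Filter.tendsto_id
  refine tendsto_of_tendsto_of_tendsto_of_le_of_le' tendsto_const_nhds h ?_ ?_
  · filter_upwards [Filter.eventually_ge_atTop 0] with z hz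
    exact mul_nonneg hz (gQ_nonneg v z)
  · filter_upwards with z
    have : z * gQ v z = ∫ x in Ioi z, z ∂(gaussianReal 0 v.toNNReal) := by
      rw [setIntegral_const, gQ_eq, smul_eq_mul, mul_comm]
    rw [this]
    exact setIntegral_mono_on (integrable_const _).integrableOn hi.integrableOn measurableSet_Ioi
      fun x hx => le_of_lt hx

lemma gQ_tendsto (v : ℝ) : Filter.Tendsto (gQ v) Filter.atTop (nhds 0) := by
  refine tendsto_of_tendsto_of_tendsto_of_le_of_le' tendsto_const_nhds (zgQ_tendsto v) ?_ ?_
  · filter_upwards with z using gQ_nonneg v z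
  · filter_upwards [Filter.eventually_ge_atTop 1] with z hz
    exact le_mul_of_one_le_left (gQ_nonneg v z) hz

lemma gphi_bdd {v : ℝ} (hv : 0 < v) (z : ℝ) : ‖gphi v z‖ ≤ (√(2 * π * v))⁻¹ := by
  rw [gphi_eq hv, Real.norm_of_nonneg (by positivity)]
  apply mul_le_of_le_one_right (by positivity)
  rw [Real.exp_le_one_iff, neg_div]
  have : 0 ≤ z ^ 2 / (2 * v) := by positivity
  linarith

lemma gphi_gQ_tendsto {v : ℝ} (hv : 0 < v) (w : ℝ) :
    Filter.Tendsto (fun z => gphi v z * gQ w z) Filter.atTop (nhds 0) := by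
  refine squeeze_zero_norm (a := fun z => (√(2 * π * v))⁻¹ * gQ w z) ?_ ?_
  · intro z
    rw [norm_mul, Real.norm_of_nonneg (gQ_nonneg w z)]
    exact mul_le_mul_of_nonneg_right (gphi_bdd hv z) (gQ_nonneg w z)
  · simpa using (gQ_tendsto w).const_mul ((√(2 * π * v))⁻¹)

lemma gQ_zero {v : ℝ} (hv : 0 < v) : gQ v 0 = 1 / 2 := by
  have h1 : gQ v 0 = ∫ x in Ioi 0, gphi v x := by
    have := intervalIntegral.integral_Iic_add_Ioi (b := (0:ℝ)) (gphi_integrable v).integrableOn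
      (gphi_integrable v).integrableOn
    have h2 : ∫ x, gphi v x = 1 := integral_gaussianPDFReal_eq_one 0 (toNN_ne hv)
    rw [gQ, cdf_eq hv]; linarith
  have h2 : gaussianCdf v 0 = ∫ x in Ioi 0, gphi v x := by
    rw [cdf_eq hv]
    have := integral_comp_neg_Iic (0:ℝ) (gphi v)
    rw [neg_zero] at this
    rw [← this]
    congr 1; ext x; rw [gphi_eq hv, gphi_eq hv]; simp
  have h3 : gQ v 0 = 1 - gaussianCdf v 0 := rfl
  linarith

lemma gphi_mul {s t : ℝ} (hs : 0 < s) (ht : 0 < t) (z : ℝ) :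
    (s + t) * (gphi s z * gphi t z) = √(s + t) / √(2 * π) * gphi (s * t / (s + t)) z := by
  have hst : 0 < s + t := by positivity
  have hu : 0 < s * t / (s + t) := by positivity
  rw [gphi_eq hs, gphi_eq ht, gphi_eq hu]
  have he : rexp (-z ^ 2 / (2 * s)) * rexp (-z ^ 2 / (2 * t))
      = rexp (-z ^ 2 / (2 * (s * t / (s + t)))) := by
    rw [← Real.exp_add]; congr 1; field_simp; ring
  rw [← he, Real.sqrt_mul (by positivity), Real.sqrt_mul (by positivity) t,
    Real.sqrt_mul (by positivity) (s * t / (s + t)), Real.sqrt_div (by positivity),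
    Real.sqrt_mul hs.le]
  have h1 := Real.sqrt_pos.2 hs
  have h2 := Real.sqrt_pos.2 ht
  have h3 := Real.sqrt_pos.2 hst
  have h4 : 0 < √(2 * π) := Real.sqrt_pos.2 (by positivity)
  have h5 := Real.sq_sqrt hst.le
  generalize √(s + t) = a at *
  rw [← h5]
  field_simp

theorem integral_gaussian_tail_mul_tail (s t : ℝ) (hs : 0 < s) (hst : s ≤ t) :
    ∫ z in Set.Ioi (0 : ℝ), (1 - gaussianCdf s z) * (1 - gaussianCdf t z)
      = (Real.sqrt s + Real.sqrt t - Real.sqrt (s + t)) / (2 * Real.sqrt (2 * Real.pi)) := by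
  have ht : 0 < t := hs.trans_le hst
  have hu : 0 < s * t / (s + t) := by positivity
  have key := integral_Ioi_of_hasDerivAt_of_nonneg' (a := 0) (l := 0)
    (g := fun z => z * gQ s z * gQ t z - s * (gphi s z * gQ t z) - t * (gphi t z * gQ s z)
      + √(s + t) / √(2 * π) * gQ (s * t / (s + t)) z)
    (g' := fun z => gQ s z * gQ t z) ?_ ?_ ?_
  · change ∫ z in Ioi (0:ℝ), gQ s z * gQ t z = _
    rw [key]
    have e : ∀ v : ℝ, 0 < v → v * gphi v 0 = √v / √(2 * π) := by
      intro v hv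
      rw [gphi_eq hv, Real.sqrt_mul (by positivity)]
      have h1 := Real.sqrt_pos.2 hv
      have h4 : 0 < √(2 * π) := Real.sqrt_pos.2 (by positivity)
      have h5 := Real.sq_sqrt hv.le
      simp
      field_simp
      linarith
    simp only [gQ_zero hs, gQ_zero ht, gQ_zero hu, ← mul_assoc, e s hs, e t ht]
    field_simp
    ring
  · intro z _
    have hQs := gQ_deriv hs z
    have hQt := gQ_deriv ht z
    have hps := gphi_deriv hs z
    have hpt := gphi_deriv ht z
    have := (((((hasDerivAt_id z).mul hQs).mul hQt).sub ((hps.mul hQt).const_mul s)).sub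
      ((hpt.mul hQs).const_mul t)).add ((gQ_deriv hu z).const_mul (√(s + t) / √(2 * π)))
    refine this.congr_deriv ?_
    have e := gphi_mul hs ht z
    simp only [Pi.mul_apply, id]
    have e1 : s * (-(z / s) * gphi s z * gQ t z + gphi s z * -gphi t z)
        = -z * gphi s z * gQ t z - s * (gphi s z * gphi t z) := by field_simp; ring
    have e2 : t * (-(z / t) * gphi t z * gQ s z + gphi t z * -gphi s z)
        = -z * gphi t z * gQ s z - t * (gphi s z * gphi t z) := by field_simp; ring
    rw [e1, e2]
    linear_combination e
  · exact fun z _ => mul_nonneg (gQ_nonneg s z) (gQ_nonneg t z)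
  · have := ((((zgQ_tendsto s).mul (gQ_tendsto t)).sub ((gphi_gQ_tendsto hs t).const_mul s)).sub
      ((gphi_gQ_tendsto ht s).const_mul t)).add
      ((gQ_tendsto (s * t / (s + t))).const_mul (√(s + t) / √(2 * π)))
    simpa using this
end

section
/- Let 0 < s < t. Let X and Y be independent real random variables where X has the centered Gaussian distribution with variance s and Y has the centered Gaussian distribution with variance t − s. Then ∫_{-∞}^{∞} P(X > z and X + Y ≤ z) dz = √(t−s)/√(2π). (In terms of standard Brownian motion B, since B_t = B_s + (B_t − B_s) with independent Gaussian increments, this says ∫_{-∞}^{∞} P(B_s > z ≥ B_t) dz = √(t−s)/√(2π).) -/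
open MeasureTheory ProbabilityTheory Real Set

lemma aux_gauss_pos (v : NNReal) (hv : v ≠ 0) :
    ∫ y, max y 0 ∂(gaussianReal 0 v) = Real.sqrt v / Real.sqrt (2 * Real.pi) := by
  have hv0 : (0:ℝ) < v := by exact_mod_cast pos_iff_ne_zero.mpr hv
  rw [integral_gaussianReal_eq_integral_smul hv]
  have h1 : (fun y : ℝ => gaussianPDFReal 0 v y • max y 0)
      = (Ioi (0:ℝ)).indicator (fun y => (√(2 * π * v))⁻¹ *
        (y ^ (1:ℝ) * rexp (-(1/(2*v)) * y ^ (2:ℝ)))) := by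
    ext y
    by_cases hy : 0 < y
    · rw [indicator_of_mem (by exact hy), max_eq_left hy.le, gaussianPDFReal]
      simp only [smul_eq_mul, sub_zero, rpow_one, rpow_two]
      rw [show -y ^ 2 / (2 * (v:ℝ)) = -(1 / (2 * (v:ℝ))) * y ^ 2 by ring]
      ring
    · rw [indicator_of_notMem (by exact hy), max_eq_right (not_lt.mp hy), smul_zero]
  rw [h1, integral_indicator measurableSet_Ioi, integral_const_mul,
    integral_rpow_mul_exp_neg_mul_rpow (by norm_num) (by norm_num) (by positivity)]
  norm_num [rpow_neg_one]
  have e : √(v:ℝ) * √(v:ℝ) = v := Real.mul_self_sqrt hv0.le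
  have : √(v:ℝ) ≠ 0 := by positivity
  field_simp
  nlinarith [e]

theorem integral_crossing_prob
    {Ω : Type*} [MeasureSpace Ω] [IsProbabilityMeasure (ℙ : Measure Ω)]
    (s t : ℝ) (hs : 0 < s) (hst : s < t)
    (X Y : Ω → ℝ) (hX : Measurable X) (hY : Measurable Y)
    (hindep : IndepFun X Y ℙ)
    (hXlaw : Measure.map X ℙ = ProbabilityTheory.gaussianReal 0 s.toNNReal)
    (hYlaw : Measure.map Y ℙ = ProbabilityTheory.gaussianReal 0 (t - s).toNNReal) :
    ∫ z : ℝ, (ℙ {ω | X ω > z ∧ X ω + Y ω ≤ z}).toReal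
      = Real.sqrt (t - s) / Real.sqrt (2 * Real.pi) := by
  have hv : (t - s).toNNReal ≠ 0 := by simpa using hst
  set S : Set (ℝ × Ω) := {p | X p.2 > p.1 ∧ X p.2 + Y p.2 ≤ p.1} with hS
  have mS : MeasurableSet S := by
    apply MeasurableSet.inter
    · exact measurableSet_lt measurable_fst (hX.comp measurable_snd)
    · exact measurableSet_le ((hX.comp measurable_snd).add (hY.comp measurable_snd)) measurable_fst
  have hm : Measurable fun z : ℝ => ℙ {ω | X ω > z ∧ X ω + Y ω ≤ z} :=
    measurable_measure_prodMk_left (ν := (ℙ : Measure Ω)) mS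
  rw [integral_toReal hm.aemeasurable (by filter_upwards with z using measure_lt_top _ _)]
  have h1 : ∫⁻ z : ℝ, ℙ {ω | X ω > z ∧ X ω + Y ω ≤ z} = ∫⁻ ω, ENNReal.ofReal (-(Y ω)) := by
    have a := Measure.prod_apply (μ := (volume : Measure ℝ)) (ν := (ℙ : Measure Ω)) mS
    have b := Measure.prod_apply_symm (μ := (volume : Measure ℝ)) (ν := (ℙ : Measure Ω)) mS
    refine (a.symm.trans b).trans (lintegral_congr fun ω => ?_)
    have : (fun x : ℝ => (x, ω)) ⁻¹' S = Ico (X ω + Y ω) (X ω) := by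
      ext z; simp [hS, and_comm]
    rw [this, Real.volume_Ico]; congr 1; ring
  have h2 : ∫⁻ ω, ENNReal.ofReal (-(Y ω))
      = ∫⁻ y, ENNReal.ofReal y ∂(gaussianReal 0 (t - s).toNNReal) := by
    have h3 : (gaussianReal 0 (t - s).toNNReal) = Measure.map (fun ω => -(Y ω)) ℙ := by
      have := gaussianReal_map_neg (μ := 0) (v := (t - s).toNNReal)
      rw [neg_zero] at this
      rw [← this, ← hYlaw, Measure.map_map measurable_neg hY]; rfl
    rw [h3, lintegral_map ENNReal.measurable_ofReal (by fun_prop)]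
  rw [h1, h2]
  have h4 := aux_gauss_pos _ hv
  rw [integral_eq_lintegral_of_nonneg_ae (by filter_upwards with y using le_max_right _ _)
    (by fun_prop), Real.coe_toNNReal _ (by linarith)] at h4
  rw [← h4]
  congr 2
  ext y
  simp [ENNReal.ofReal_max]
end

section
/- The kernel K(s,t) = √(s+t) − √|s−t| on [0,∞) × [0,∞) is positive semidefinite: for every integer N ≥ 1, all t_1, ..., t_N ∈ [0,∞) and all θ_1, ..., θ_N ∈ ℝ, one has Σ_{i=1}^{N} Σ_{j=1}^{N} θ_i θ_j (√(t_i + t_j) − √|t_i − t_j|) ≥ 0. -/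
open MeasureTheory Set in
lemma aux_int (x : ℝ) :
    IntegrableOn (fun u : ℝ => (1 - Real.cos (x * u)) * u ^ (-(3/2) : ℝ)) (Ioi 0) := by
  have hm : ∀ s : Set ℝ, AEStronglyMeasurable
      (fun u : ℝ => (1 - Real.cos (x * u)) * u ^ (-(3/2) : ℝ)) (volume.restrict s) := by
    intro s
    apply Measurable.aestronglyMeasurable
    fun_prop
  rw [← Ioc_union_Ioi_eq_Ioi (zero_le_one : (0:ℝ) ≤ 1)]
  refine IntegrableOn.union ?_ ?_
  · have h : IntegrableOn (fun u : ℝ => x ^ 2 / 2 * u ^ (1/2 : ℝ)) (Ioc 0 1) := by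
      have := (intervalIntegral.intervalIntegrable_rpow' (a := 0) (b := 1)
        (show (-1:ℝ) < 1/2 by norm_num)).const_mul (x^2/2)
      rwa [intervalIntegrable_iff_integrableOn_Ioc_of_le zero_le_one] at this
    refine Integrable.mono' h (hm _) ?_
    refine (ae_restrict_mem measurableSet_Ioc).mono fun u hu => ?_
    have hu0 : 0 < u := hu.1
    have h1 := Real.one_sub_sq_div_two_le_cos (x := x * u)
    have h2 := Real.cos_le_one (x * u)
    have hw : 0 ≤ u ^ (-(3/2) : ℝ) := by positivity
    rw [Real.norm_of_nonneg (mul_nonneg (by linarith) hw)]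
    have e : u ^ (1/2 : ℝ) = u ^ 2 * u ^ (-(3/2) : ℝ) := by
      rw [← Real.rpow_natCast, ← Real.rpow_add hu0]; norm_num
    rw [e, ← mul_assoc]
    exact mul_le_mul_of_nonneg_right (by nlinarith) hw
  · have h : IntegrableOn (fun u : ℝ => 2 * u ^ (-(3/2) : ℝ)) (Ioi 1) :=
      (integrableOn_Ioi_rpow_of_lt (by norm_num) one_pos).const_mul 2
    refine Integrable.mono' h (hm _) ?_
    refine (ae_restrict_mem measurableSet_Ioi).mono fun u hu => ?_
    have hu0 : 0 < u := lt_trans one_pos hu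
    have h1 := Real.neg_one_le_cos (x * u)
    have h2 := Real.cos_le_one (x * u)
    have hw : 0 ≤ u ^ (-(3/2) : ℝ) := by positivity
    rw [Real.norm_of_nonneg (mul_nonneg (by linarith) hw)]
    exact mul_le_mul_of_nonneg_right (by linarith) hw

open MeasureTheory Set in
lemma aux_pos :
    0 < ∫ u in Ioi (0:ℝ), (1 - Real.cos (1 * u)) * u ^ (-(3/2) : ℝ) := by
  rw [setIntegral_pos_iff_support_of_nonneg_ae _ (aux_int 1)]
  · refine lt_of_lt_of_le (b := volume (Ioo (0:ℝ) 1)) (by simp) (measure_mono ?_)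
    intro u hu
    refine ⟨?_, hu.1⟩
    have hu0 : 0 < u := hu.1
    have hc : Real.cos u < 1 := by
      have := Real.cos_lt_cos_of_nonneg_of_le_pi (x := 0) (y := u) le_rfl
        (by linarith [hu.2, Real.pi_gt_three]) hu0
      simpa using this
    have hw : 0 < u ^ (-(3/2) : ℝ) := by positivity
    rw [Function.mem_support, one_mul]
    exact (mul_pos (by linarith) hw).ne'
  · refine (ae_restrict_mem measurableSet_Ioi).mono fun u hu => ?_
    have hu0 : 0 < u := hu
    exact mul_nonneg (by linarith [Real.cos_le_one (1 * u)]) (by positivity)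

open MeasureTheory Set in
lemma aux_scale (x : ℝ) :
    ∫ u in Ioi (0:ℝ), (1 - Real.cos (x * u)) * u ^ (-(3/2) : ℝ) =
      Real.sqrt |x| * ∫ u in Ioi (0:ℝ), (1 - Real.cos (1 * u)) * u ^ (-(3/2) : ℝ) := by
  have key : ∀ y : ℝ, 0 < y → 
    ∫ u in Ioi (0:ℝ), (1 - Real.cos (y * u)) * u ^ (-(3/2) : ℝ) =
      Real.sqrt y * ∫ u in Ioi (0:ℝ), (1 - Real.cos (1 * u)) * u ^ (-(3/2) : ℝ) := by
    intro y hy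
    have h := integral_comp_mul_left_Ioi
      (fun u : ℝ => (1 - Real.cos (1 * u)) * u ^ (-(3/2) : ℝ)) 0 hy
    rw [mul_zero, smul_eq_mul] at h
    have e : Real.sqrt y = y ^ (3/2 : ℝ) * y⁻¹ := by
      rw [Real.sqrt_eq_rpow, ← Real.rpow_neg_one, ← Real.rpow_add hy]; norm_num
    rw [e, mul_assoc, ← h, ← integral_const_mul]
    refine setIntegral_congr_fun measurableSet_Ioi fun u hu => ?_
    have hu0 : 0 < u := hu
    have e2 : y ^ (3/2 : ℝ) * y ^ (-(3/2) : ℝ) = 1 := by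
      rw [← Real.rpow_add hy]; norm_num
    simp only [one_mul]
    rw [Real.mul_rpow hy.le hu0.le]
    linear_combination (-(1 - Real.cos (y * u)) * u ^ (-(3/2) : ℝ)) * e2
  rcases eq_or_ne x 0 with rfl | hx
  · simp
  · rw [← key |x| (abs_pos.2 hx)]
    refine setIntegral_congr_fun measurableSet_Ioi fun u hu => ?_
    have hu0 : 0 < u := hu
    have : Real.cos (|x| * u) = Real.cos (x * u) := by
      rcases abs_choice x with h | h <;> rw [h]
      rw [neg_mul, Real.cos_neg]
    simp only [this]

/-- The kernel `K(s,t) = √(s+t) − √|s−t|` on `[0,∞) × [0,∞)` is positive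
semidefinite. -/
theorem posSemidef_sqrt_diff_kernel (N : ℕ) (hN : 1 ≤ N)
    (t : Fin N → ℝ) (ht : ∀ i, 0 ≤ t i) (θ : Fin N → ℝ) :
    0 ≤ ∑ i : Fin N, ∑ j : Fin N,
        θ i * θ j * (Real.sqrt (t i + t j) - Real.sqrt |t i - t j|) := by
  have hC := aux_pos
  refine nonneg_of_mul_nonneg_left ?_ hC
  have hint : ∀ i j : Fin N, MeasureTheory.IntegrableOn (fun u : ℝ => θ i * θ j *
      ((1 - Real.cos ((t i + t j) * u)) * u ^ (-(3/2) : ℝ)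
        - (1 - Real.cos ((t i - t j) * u)) * u ^ (-(3/2) : ℝ))) (Set.Ioi 0) :=
    fun i j => ((aux_int _).sub (aux_int _)).const_mul _
  have h : (∑ i : Fin N, ∑ j : Fin N,
        θ i * θ j * (Real.sqrt (t i + t j) - Real.sqrt |t i - t j|)) *
        (∫ u in Set.Ioi (0:ℝ), (1 - Real.cos (1 * u)) * u ^ (-(3/2) : ℝ)) =
      ∫ u in Set.Ioi (0:ℝ), ∑ i : Fin N, ∑ j : Fin N, θ i * θ j *
      ((1 - Real.cos ((t i + t j) * u)) * u ^ (-(3/2) : ℝ)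
        - (1 - Real.cos ((t i - t j) * u)) * u ^ (-(3/2) : ℝ)) := by
    rw [MeasureTheory.integral_finsetSum _ fun i _ =>
      MeasureTheory.integrable_finsetSum _ fun j _ => hint i j, Finset.sum_mul]
    refine Finset.sum_congr rfl fun i _ => ?_
    rw [MeasureTheory.integral_finsetSum _ fun j _ => hint i j, Finset.sum_mul]
    refine Finset.sum_congr rfl fun j _ => ?_
    rw [MeasureTheory.integral_const_mul,
      MeasureTheory.integral_sub (aux_int _) (aux_int _), aux_scale (t i + t j),
      aux_scale (t i - t j), abs_of_nonneg (add_nonneg (ht i) (ht j))]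
    ring
  rw [h]
  refine MeasureTheory.setIntegral_nonneg measurableSet_Ioi fun u hu => ?_
  have hu0 : 0 < u := hu
  have e : (∑ i : Fin N, ∑ j : Fin N, θ i * θ j *
      ((1 - Real.cos ((t i + t j) * u)) * u ^ (-(3/2) : ℝ)
        - (1 - Real.cos ((t i - t j) * u)) * u ^ (-(3/2) : ℝ))) =
      2 * u ^ (-(3/2) : ℝ) * ((∑ i : Fin N, θ i * Real.sin (t i * u)) *
        (∑ j : Fin N, θ j * Real.sin (t j * u))) := by
    rw [Finset.sum_mul_sum, Finset.mul_sum]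
    refine Finset.sum_congr rfl fun i _ => ?_
    rw [Finset.mul_sum]
    refine Finset.sum_congr rfl fun j _ => ?_
    rw [add_mul, sub_mul (t i), Real.cos_add, Real.cos_sub]
    ring
  rw [e]
  exact mul_nonneg (by positivity) (mul_self_nonneg _)
end

section
/- Let a, b ≥ 0 and define g : [0,∞) × [0,∞) → ℝ by g(s,t) = a(√(s+t) − √|t−s|) + b(√s + √t − √(s+t)). Then for all 0 ≤ s ≤ t, g(t,t) + g(s,s) − 2g(s,t) ≤ (2a + b)·√(t−s). -/
/-- The increment bound for the covariance (2.21): with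
`g(s,t) = a(√(s+t) − √|t−s|) + b(√s + √t − √(s+t))` for `a, b ≥ 0`, one has
`g(t,t) + g(s,s) − 2g(s,t) ≤ (2a + b)·√(t−s)` for all `0 ≤ s ≤ t`. -/
theorem covariance_increment_bound (a b : ℝ) (ha : 0 ≤ a) (hb : 0 ≤ b)
    (g : ℝ → ℝ → ℝ)
    (hg : ∀ s t, 0 ≤ s → 0 ≤ t →
      g s t = a * (Real.sqrt (s + t) - Real.sqrt |t - s|)
        + b * (Real.sqrt s + Real.sqrt t - Real.sqrt (s + t)))
    (s t : ℝ) (hs : 0 ≤ s) (hst : s ≤ t) :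
    g t t + g s s - 2 * g s t ≤ (2 * a + b) * Real.sqrt (t - s) := by
  have ht : 0 ≤ t := hs.trans hst
  have hd : 0 ≤ t - s := sub_nonneg.mpr hst
  rw [hg t t ht ht, hg s s hs hs, hg s t hs ht, abs_of_nonneg hd]
  simp only [sub_self, abs_zero, Real.sqrt_zero]
  have p0 := Real.sqrt_nonneg (t + t)
  have q0 := Real.sqrt_nonneg (s + s)
  have r0 := Real.sqrt_nonneg (s + t)
  have d0 := Real.sqrt_nonneg (t - s)
  have p2 := Real.sq_sqrt (show 0 ≤ t + t by linarith)
  have q2 := Real.sq_sqrt (show 0 ≤ s + s by linarith)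
  have r2 := Real.sq_sqrt (show 0 ≤ s + t by linarith)
  have d2 := Real.sq_sqrt hd
  have h1 : Real.sqrt (t + t) + Real.sqrt (s + s) ≤ 2 * Real.sqrt (s + t) := by
    refine (sq_le_sq₀ (by positivity) (by positivity)).mp ?_
    nlinarith [sq_nonneg (Real.sqrt (t + t) - Real.sqrt (s + s))]
  have h2 : Real.sqrt (s + t) ≤ Real.sqrt (t + t) := Real.sqrt_le_sqrt (by linarith)
  have h3 : Real.sqrt (s + t) ≤ Real.sqrt (s + s) + Real.sqrt (t - s) := by
    refine (sq_le_sq₀ (by positivity) (by positivity)).mp ?_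
    nlinarith [mul_nonneg q0 d0]
  have h4 := mul_le_mul_of_nonneg_left h1 ha
  have h5 : b * (2 * Real.sqrt (s + t) - Real.sqrt (t + t) - Real.sqrt (s + s))
      ≤ b * Real.sqrt (t - s) := mul_le_mul_of_nonneg_left (by linarith) hb
  linarith
end

section
/- Let a, b ≥ 0 and define g : [0,∞) × [0,∞) → ℝ by g(s,t) = a(√(s+t) − √|t−s|) + b(√s + √t − √(s+t)). Fix h > 0 and define D(t) = g(t+h, t+h) + g(t,t) − 2g(t, t+h) for t ≥ 0. Then: if b > a, the function D is strictly decreasing on [0,∞); if a > b, D is strictly increasing on [0,∞); and if a = b, D is constant (equal to 2a√h). -/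
lemma F_formula (h x : ℝ) (hh : 0 < h) (hx : 0 ≤ x) :
    Real.sqrt (x + 2 * h) + Real.sqrt x - 2 * Real.sqrt (x + h) =
      -(2 * h ^ 2 / ((Real.sqrt (x + 2 * h) + Real.sqrt (x + h)) *
        (Real.sqrt (x + h) + Real.sqrt x) * (Real.sqrt x + Real.sqrt (x + 2 * h)))) := by
  have hp := Real.sqrt_nonneg x
  have hq : 0 < Real.sqrt (x + h) := Real.sqrt_pos.2 (by linarith)
  have hr : 0 < Real.sqrt (x + 2 * h) := Real.sqrt_pos.2 (by linarith)
  have ep := Real.sq_sqrt hx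
  have eq := Real.sq_sqrt (show 0 ≤ x + h by linarith)
  have er := Real.sq_sqrt (show 0 ≤ x + 2 * h by linarith)
  generalize Real.sqrt x = p at *
  generalize Real.sqrt (x + h) = q at *
  generalize Real.sqrt (x + 2 * h) = r at *
  have h1 : r ^ 2 - q ^ 2 = h := by linarith
  have h2 : q ^ 2 - p ^ 2 = h := by linarith
  rw [← neg_div, eq_div_iff (by positivity)]
  linear_combination (q + p) * (p + r) * h1 - (r + q) * (p + r) * h2 + h * (-h1 - h2)

lemma F_strictMono (h x y : ℝ) (hh : 0 < h) (hx : 0 ≤ x) (hxy : x < y) :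
    Real.sqrt (x + 2 * h) + Real.sqrt x - 2 * Real.sqrt (x + h) <
    Real.sqrt (y + 2 * h) + Real.sqrt y - 2 * Real.sqrt (y + h) := by
  rw [F_formula h x hh hx, F_formula h y hh (by linarith)]
  have hp := Real.sqrt_nonneg x
  have hq : 0 < Real.sqrt (x + h) := Real.sqrt_pos.2 (by linarith)
  have hr : 0 < Real.sqrt (x + 2 * h) := Real.sqrt_pos.2 (by linarith)
  have l1 := Real.sqrt_lt_sqrt hx hxy
  have l2 := Real.sqrt_lt_sqrt (show 0 ≤ x + h by linarith) (show x + h < y + h by linarith)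
  have l3 := Real.sqrt_lt_sqrt (show 0 ≤ x + 2 * h by linarith)
    (show x + 2 * h < y + 2 * h by linarith)
  apply neg_lt_neg
  apply div_lt_div_of_pos_left (by positivity) (by positivity)
  gcongr

/-- Monotonicity of the increment variance of the limiting process `Z`: with
`g(s,t) = a(√(s+t) − √|t−s|) + b(√s + √t − √(s+t))` for `a, b ≥ 0`, `h > 0`, and
`D(t) = g(t+h,t+h) + g(t,t) − 2g(t,t+h)`, the function `D` is strictly
decreasing on `[0,∞)` if `b > a`, strictly increasing on `[0,∞)` if `a > b`,
and constant equal to `2a√h` if `a = b`. -/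
theorem increment_variance_monotonicity (a b : ℝ) (ha : 0 ≤ a) (hb : 0 ≤ b)
    (h : ℝ) (hh : 0 < h)
    (g : ℝ → ℝ → ℝ)
    (hg : ∀ s t, 0 ≤ s → 0 ≤ t →
      g s t = a * (Real.sqrt (s + t) - Real.sqrt |t - s|)
        + b * (Real.sqrt s + Real.sqrt t - Real.sqrt (s + t)))
    (D : ℝ → ℝ)
    (hD : ∀ t, 0 ≤ t → D t = g (t + h) (t + h) + g t t - 2 * g t (t + h)) :
    (a < b → StrictAntiOn D (Set.Ici 0)) ∧
    (b < a → StrictMonoOn D (Set.Ici 0)) ∧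
    (a = b → ∀ t ∈ Set.Ici (0 : ℝ), D t = 2 * a * Real.sqrt h) := by
  have key : ∀ t, 0 ≤ t → D t = 2 * a * Real.sqrt h + (a - b) *
      (Real.sqrt (2 * t + 2 * h) + Real.sqrt (2 * t) - 2 * Real.sqrt (2 * t + h)) := by
    intro t ht
    rw [hD t ht, hg _ _ (by linarith) (by linarith), hg _ _ ht ht, hg _ _ ht (by linarith)]
    have e1 : t + h + (t + h) = 2 * t + 2 * h := by ring
    have e2 : t + t = 2 * t := by ring
    have e3 : t + (t + h) = 2 * t + h := by ring
    have e4 : t + h - t = h := by ring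
    rw [e1, e2, e3, e4, abs_of_pos hh]
    simp only [sub_self, abs_zero, Real.sqrt_zero]
    ring
  refine ⟨fun hab x hx y hy hxy => ?_, fun hab x hx y hy hxy => ?_, fun hab t ht => ?_⟩
  · rw [key x hx, key y hy]
    have hx' : (0 : ℝ) ≤ x := hx
    have := F_strictMono h (2 * x) (2 * y) hh (by linarith) (by linarith)
    have := mul_lt_mul_of_neg_left this (sub_neg.2 hab)
    linarith
  · rw [key x hx, key y hy]
    have hx' : (0 : ℝ) ≤ x := hx
    have := F_strictMono h (2 * x) (2 * y) hh (by linarith) (by linarith)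
    have := mul_lt_mul_of_pos_left this (sub_pos.2 hab)
    linarith
  · rw [key t ht, hab]
    ring
end

section
/- Let u₀ : ℝ → ℝ be nondecreasing and Lipschitz continuous and let t > 0. For x ∈ ℝ define Φ_x(y) = u₀(y) + (x − y)²/(4t) and I(x,t) = { y ≤ x : Φ_x(y) = inf_{y' ≤ x} Φ_x(y') }. Then the set of shock points { x ∈ ℝ : I(x,t) contains at least two points } is countable. -/
/-- Countability of shocks: for `u₀` nondecreasing and Lipschitz and `t > 0`,
the set of points `x` such that the minimizing set `I(x,t)` of the Hopf–Lax
functional `Φ_x(y) = u₀(y) + (x−y)²/(4t)` over `(−∞, x]` contains at least two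
points is countable. -/
theorem shocks_countable (u₀ : ℝ → ℝ) (hmono : Monotone u₀)
    (K : NNReal) (hLip : LipschitzWith K u₀)
    (t : ℝ) (ht : 0 < t) :
    Set.Countable {x : ℝ |
      ∃ y₁ y₂ : ℝ, y₁ ≠ y₂ ∧
        (y₁ ≤ x ∧ ∀ y' ≤ x,
          u₀ y₁ + (x - y₁) ^ 2 / (4 * t) ≤ u₀ y' + (x - y') ^ 2 / (4 * t)) ∧
        (y₂ ≤ x ∧ ∀ y' ≤ x,
          u₀ y₂ + (x - y₂) ^ 2 / (4 * t) ≤ u₀ y' + (x - y') ^ 2 / (4 * t))} := by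
  classical
  have key : ∀ x x' y z : ℝ, x < x' →
      (y ≤ x ∧ ∀ y' ≤ x, u₀ y + (x - y) ^ 2 / (4 * t) ≤ u₀ y' + (x - y') ^ 2 / (4 * t)) →
      (z ≤ x' ∧ ∀ y' ≤ x', u₀ z + (x' - z) ^ 2 / (4 * t) ≤ u₀ y' + (x' - y') ^ 2 / (4 * t)) →
      y ≤ z := by
    intro x x' y z hx hy hz
    by_contra! hlt
    have h1 := hy.2 z (by linarith [hy.1])
    have h2 := hz.2 y (by linarith [hy.1])
    have h3 : (x - y) ^ 2 / (4 * t) + (x' - z) ^ 2 / (4 * t)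
        ≤ (x - z) ^ 2 / (4 * t) + (x' - y) ^ 2 / (4 * t) := by linarith
    rw [← add_div, ← add_div, div_le_div_iff_of_pos_right (by positivity)] at h3
    nlinarith [mul_pos (sub_pos.2 hx) (sub_pos.2 hlt)]
  set S := {x : ℝ |
      ∃ y₁ y₂ : ℝ, y₁ ≠ y₂ ∧
        (y₁ ≤ x ∧ ∀ y' ≤ x,
          u₀ y₁ + (x - y₁) ^ 2 / (4 * t) ≤ u₀ y' + (x - y') ^ 2 / (4 * t)) ∧
        (y₂ ≤ x ∧ ∀ y' ≤ x,
          u₀ y₂ + (x - y₂) ^ 2 / (4 * t) ≤ u₀ y' + (x - y') ^ 2 / (4 * t))} with hS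
  have hq : ∀ x : S, ∃ q : ℚ, ∃ a b : ℝ, a < q ∧ (q : ℝ) < b ∧
      (a ≤ x ∧ ∀ y' ≤ (x : ℝ),
        u₀ a + (x - a) ^ 2 / (4 * t) ≤ u₀ y' + (x - y') ^ 2 / (4 * t)) ∧
      (b ≤ x ∧ ∀ y' ≤ (x : ℝ),
        u₀ b + (x - b) ^ 2 / (4 * t) ≤ u₀ y' + (x - y') ^ 2 / (4 * t)) := by
    rintro ⟨x, y₁, y₂, hne, h1, h2⟩
    rcases lt_or_gt_of_ne hne with h | h
    · obtain ⟨q, hq1, hq2⟩ := exists_rat_btwn h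
      exact ⟨q, y₁, y₂, hq1, hq2, h1, h2⟩
    · obtain ⟨q, hq1, hq2⟩ := exists_rat_btwn h
      exact ⟨q, y₂, y₁, hq1, hq2, h2, h1⟩
  choose q a b haq hqb ha hb using hq
  have hmon : ∀ x x' : S, (x : ℝ) < x' → (q x : ℝ) < q x' := fun x x' h =>
    (hqb x).trans ((key x x' (b x) (a x') h (hb x) (ha x')).trans_lt (haq x'))
  have hinj : Function.Injective q := by
    intro x x' h
    have h' : (q x : ℝ) = q x' := by rw [h]
    rcases lt_trichotomy (x : ℝ) x' with h1 | h1 | h1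
    · exact absurd h' (hmon x x' h1).ne
    · exact Subtype.ext h1
    · exact absurd h' (hmon x' x h1).ne'
  exact Set.countable_coe_iff.1 hinj.countable
end
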